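/- For every integer e ≥ 1 and general points: ℓ(L(7e, 7e−5, 6^{2e})) = 0 (virtual dimension −10), ℓ(L(7e+1, 7e−4, 6^{2e})) = 2 (virtual dimension −4), ℓ(L(7e+2, 7e−3, 6^{2e})) = 5 (virtual dimension 2), and ℓ(L(7e+3, 7e−2, 6^{2e})) = 9 (virtual dimension 8); in particular all four systems are special. -/

import Mathlib

open MvPolynomial

/-- The iterated partial derivative corresponding to the multi-index `ν`. -/
noncomputable def mderiv (ν : Fin 3 → ℕ) :
    MvPolynomial (Fin 3) ℂ →ₗ[ℂ] MvPolynomial (Fin 3) ℂ :=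
  ((pderiv (R := ℂ) (0 : Fin 3)).toLinearMap ^ ν 0) ∘ₗ
  ((pderiv (R := ℂ) (1 : Fin 3)).toLinearMap ^ ν 1) ∘ₗ
  ((pderiv (R := ℂ) (2 : Fin 3)).toLinearMap ^ ν 2)

/-- The linear system `L(d; m)` of homogeneous forms of degree `d` in three variables
all of whose partial derivatives of order `< m i` vanish at the point `p i`,
i.e. plane curves of degree `d` with multiplicity at least `m i` at `p i`. -/
noncomputable def linSys {k : ℕ} (p : Fin k → Fin 3 → ℂ) (d : ℕ) (m : Fin k → ℕ) :
    Submodule ℂ (MvPolynomial (Fin 3) ℂ) :=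
  (homogeneousSubmodule (Fin 3) ℂ d) ⊓
    ⨅ (i : Fin k), ⨅ (ν : Fin 3 → ℕ), ⨅ (_ : ν 0 + ν 1 + ν 2 < m i),
      LinearMap.ker ((aeval (p i)).toLinearMap ∘ₗ mderiv ν)

/-- The projective dimension `ℓ` of the linear system (`-1` means empty). -/
noncomputable def projDim {k : ℕ} (p : Fin k → Fin 3 → ℂ) (d : ℕ) (m : Fin k → ℕ) : ℤ :=
  (Module.finrank ℂ (linSys p d m) : ℤ) - 1

/-- The virtual dimension `v = d(d+3)/2 - ∑ mᵢ(mᵢ+1)/2`. -/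
def virtDim {k : ℕ} (d : ℕ) (m : Fin k → ℕ) : ℤ :=
  ((d : ℤ) * (d + 3)) / 2 - ∑ i : Fin k, ((m i : ℤ) * (m i + 1)) / 2

/-- The quasi-homogeneous multiplicity vector `(m₀, 6, …, 6)` on `n + 1` points. -/
def qh (n m0 : ℕ) : Fin (n + 1) → ℕ := fun i => if i = 0 then m0 else 6

/-- A property `Q` of configurations of `k` points of `ℙ²` (given by nonzero homogeneous
coordinate vectors) holds for points in general position: there is a nonzero polynomial
in the coordinates such that `Q` holds whenever it does not vanish. -/
def Generically (k : ℕ) (Q : (Fin k → Fin 3 → ℂ) → Prop) : Prop :=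
  ∃ P : MvPolynomial (Fin k × Fin 3) ℂ, P ≠ 0 ∧
    ∀ p : Fin k → Fin 3 → ℂ, (∀ i, p i ≠ 0) →
      eval (fun x => p x.1 x.2) P ≠ 0 → Q p

/-!
The four systems are the cases `(r, t) = (0, 5), (1, 4), (2, 3), (3, 2)` of
`L((r + t + 2)e + r; (r + t + 2)e - t, (r + t + 1)^{2e})`, whose projective dimension at general
points is `r(r + 3)/2`, which exceeds the virtual dimension by `t(t - 1)/2`.

For the lower bound, `L(e; e - 1, 1^{2e})` and `L(2e; 2e, 1^{2e})` have virtual dimension `0`, so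
they contain curves `C` and `G`, and adding `G + tC` to the members of `L(r(e + 1); re, r^{2e})`,
which has virtual dimension `r(r + 3)/2`, gives members of the system. (The curve `C` is a
`(-1)`-curve which meets the system in `-t`; this is why it splits off `t` times.)

For the upper bound, the dimension is upper semicontinuous in the points, so it suffices to bound it
for one configuration: the point `(0 : 0 : 1)` together with `2e` points of the curve
`Z Y^{e - 1} = X^e`. In the chart `Y = 1` the restriction of a form to `Z = X^e` is a polynomial in
`X` divisible by the product of the `(X - s i)^K`, where `K` is the multiplicity at the `2e` points,
so it varies in a space of dimension `r + 1 - (K - 1)` (or `0`). The forms restricting to `0` are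
divisible by `Z - X^e`, with quotient in the system of the same kind for `K - 1`. Summing over
`K = r + t + 1, …, 1` gives `(r + 1) + r + ⋯ + 1`.
-/

section PointIdeal

variable {σ R A : Type*} [CommRing R] [CommRing A] [Algebra R A]

/-- The ideal of the point `p` of affine space. The polynomials of multiplicity at least `n` at `p`
are the elements of its `n`-th power. -/
noncomputable def pointIdeal (p : σ → R) : Ideal (MvPolynomial σ R) :=
  Ideal.span (Set.range fun i => X i - C (p i))

lemma X_sub_C_mem_pointIdeal (p : σ → R) (i : σ) : X i - C (p i) ∈ pointIdeal p :=
  Ideal.subset_span ⟨i, rfl⟩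

lemma pointIdeal_zero : pointIdeal (0 : σ → R) = idealOfVars σ R := by
  simp [pointIdeal]

lemma map_mem_pow_of_mem_pointIdeal_pow {p : σ → R} {J : Ideal A} (φ : MvPolynomial σ R →ₐ[R] A)
    (hφ : ∀ i, φ (X i) - algebraMap R A (p i) ∈ J) {n : ℕ} {F : MvPolynomial σ R}
    (hF : F ∈ pointIdeal p ^ n) : φ F ∈ J ^ n := by
  have hle : pointIdeal p ≤ J.comap φ := by
    rw [pointIdeal, Ideal.span_le]
    rintro _ ⟨i, rfl⟩
    simpa [algebraMap_eq] using hφ i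
  exact Ideal.le_comap_pow φ n (Ideal.pow_right_mono hle n hF)

/-- The translation `F(X) ↦ F(X + p)`, which makes `p` the origin. -/
noncomputable def recenter (p : σ → R) : MvPolynomial σ R →ₐ[R] MvPolynomial σ R :=
  aeval fun i => X i + C (p i)

lemma recenter_neg_recenter (p : σ → R) (F : MvPolynomial σ R) :
    recenter (-p) (recenter p F) = F := by
  suffices h : (recenter (-p)).comp (recenter p) = AlgHom.id R _ from DFunLike.congr_fun h F
  ext i
  simp [recenter]

lemma mem_pointIdeal_pow_iff {p : σ → R} {n : ℕ} {F : MvPolynomial σ R} :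
    F ∈ pointIdeal p ^ n ↔ ∀ μ : σ →₀ ℕ, μ.degree < n → coeff μ (recenter p F) = 0 := by
  rw [← mem_pow_idealOfVars_iff', ← pointIdeal_zero]
  refine ⟨map_mem_pow_of_mem_pointIdeal_pow _ fun i => ?_, fun h => ?_⟩
  · simpa [recenter, algebraMap_eq] using X_sub_C_mem_pointIdeal (0 : σ → R) i
  · rw [← recenter_neg_recenter p F]
    refine map_mem_pow_of_mem_pointIdeal_pow _ (fun i => ?_) h
    simpa [recenter, sub_eq_add_neg] using X_sub_C_mem_pointIdeal p i

lemma pderiv_recenter (p : σ → R) (i : σ) (F : MvPolynomial σ R) :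
    pderiv i (recenter p F) = recenter p (pderiv i F) := by
  induction F using MvPolynomial.induction_on with
  | C a => simp [recenter]
  | add F G hF hG => simp only [map_add, hF, hG]
  | mul_X F j hF =>
    have hX : pderiv i (recenter p (X j)) = recenter p (pderiv i (X j)) := by
      obtain rfl | hij := eq_or_ne j i <;> simp [recenter, *]
    simp only [map_mul, map_add, Derivation.leibniz, smul_eq_mul, hF, hX]

lemma iterate_pderiv_recenter (p : σ → R) (i : σ) (a : ℕ) (F : MvPolynomial σ R) :
    (pderiv i)^[a] (recenter p F) = recenter p ((pderiv i)^[a] F) :=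
  (Function.Semiconj.iterate_right (fun G => (pderiv_recenter p i G).symm) a F).symm

lemma coeff_iterate_pderiv (i : σ) (a : ℕ) (μ : σ →₀ ℕ) (F : MvPolynomial σ R) :
    coeff μ ((pderiv i)^[a] F) =
      ((μ i + 1).ascFactorial a : R) * coeff (μ + Finsupp.single i a) F := by
  induction a generalizing μ with
  | zero => simp
  | succ a ih =>
    rw [Function.iterate_succ_apply', coeff_pderiv, ih, add_assoc, ← Finsupp.single_add,
      add_comm 1 a, Finsupp.add_apply, Finsupp.single_eq_same, Nat.ascFactorial_succ,
      ← Nat.succ_ascFactorial]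
    push_cast
    ring

end PointIdeal

lemma aeval_eq_coeff_recenter {σ R : Type*} [CommRing R] (p : σ → R) (F : MvPolynomial σ R) :
    aeval p F = coeff 0 (recenter p F) := by
  suffices h : aeval p = (aeval (0 : σ → R)).comp (recenter p) by
    rw [h, AlgHom.comp_apply, aeval_zero, constantCoeff_eq, Algebra.algebraMap_self_apply]
  ext i
  simp [recenter]

lemma aeval_mderiv (p : Fin 3 → ℂ) (ν : Fin 3 → ℕ) (F : MvPolynomial (Fin 3) ℂ) :
    aeval p (mderiv ν F) = ((ν 0).factorial * (ν 1).factorial * (ν 2).factorial : ℕ) *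
      coeff (Finsupp.equivFunOnFinite.symm ν) (recenter p F) := by
  have hμ : 0 + Finsupp.single 0 (ν 0) + Finsupp.single 1 (ν 1) + Finsupp.single 2 (ν 2) =
      Finsupp.equivFunOnFinite.symm ν := by
    ext i
    fin_cases i <;> simp
  have hν : mderiv ν F = (pderiv 0)^[ν 0] ((pderiv 1)^[ν 1] ((pderiv 2)^[ν 2] F)) := by
    simp [mderiv, Module.End.pow_apply]
  rw [hν, aeval_eq_coeff_recenter]
  simp only [← iterate_pderiv_recenter, coeff_iterate_pderiv, hμ]
  simp [mul_assoc]

lemma mem_linSys {k : ℕ} {p : Fin k → Fin 3 → ℂ} {d : ℕ} {m : Fin k → ℕ}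
    {F : MvPolynomial (Fin 3) ℂ} :
    F ∈ linSys p d m ↔ F.IsHomogeneous d ∧ ∀ i, F ∈ pointIdeal (p i) ^ m i := by
  simp only [linSys, Submodule.mem_inf, Submodule.mem_iInf, LinearMap.mem_ker,
    LinearMap.comp_apply, AlgHom.toLinearMap_apply, aeval_mderiv, mem_pointIdeal_pow_iff,
    mem_homogeneousSubmodule]
  refine and_congr_right fun _ => forall_congr' fun i =>
    Finsupp.equivFunOnFinite.symm.forall_congr fun {ν} => ?_
  simp [Finsupp.degree_eq_sum, Fin.sum_univ_three, Nat.factorial_ne_zero]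

section MulLinSys

variable {k d d' : ℕ} {p : Fin k → Fin 3 → ℂ} {m m' : Fin k → ℕ} {F G : MvPolynomial (Fin 3) ℂ}

lemma mul_mem_linSys (hF : F ∈ linSys p d m) (hG : G ∈ linSys p d' m') :
    F * G ∈ linSys p (d + d') (m + m') := by
  rw [mem_linSys] at *
  refine ⟨hF.1.mul hG.1, fun i => ?_⟩
  rw [Pi.add_apply, pow_add]
  exact Ideal.mul_mem_mul (hF.2 i) (hG.2 i)

lemma pow_mem_linSys (hF : F ∈ linSys p d m) (n : ℕ) : F ^ n ∈ linSys p (d * n) (n • m) := by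
  rw [mem_linSys] at *
  refine ⟨hF.1.pow n, fun i => ?_⟩
  rw [Pi.smul_apply, smul_eq_mul, mul_comm, pow_mul]
  exact Ideal.pow_mem_pow (hF.2 i) n

end MulLinSys

lemma degree_erase_add {σ : Type*} (j : σ) (μ : σ →₀ ℕ) :
    (μ.erase j).degree + μ j = μ.degree := by
  rw [← Finsupp.degree_single j (μ j), ← map_add, Finsupp.erase_add_single]

section CoordinatePoint

variable {σ R : Type*} [CommRing R]

lemma degree_eq_of_coeff_ne_zero {d : ℕ} {F : MvPolynomial σ R} (hF : F.IsHomogeneous d)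
    {μ : σ →₀ ℕ} (hμ : coeff μ F ≠ 0) : μ.degree = d :=
  not_imp_comm.1 hF.coeff_eq_zero hμ

variable [DecidableEq σ]

lemma monomial_mem_pointIdeal_single_pow (j : σ) (μ : σ →₀ ℕ) (a : R) :
    monomial μ a ∈ pointIdeal (Pi.single j (1 : R)) ^ (μ.erase j).degree := by
  have hX : ∏ l ∈ (μ.erase j).support, (X l : MvPolynomial σ R) ^ μ.erase j l ∈
      ∏ l ∈ (μ.erase j).support, pointIdeal (Pi.single j (1 : R)) ^ μ.erase j l := by
    refine Ideal.prod_mem_prod fun l hl => Ideal.pow_mem_pow ?_ _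
    have hlj : l ≠ j := (Finset.mem_erase.1 (Finsupp.support_erase (f := μ) ▸ hl)).1
    simpa [hlj] using X_sub_C_mem_pointIdeal (Pi.single j (1 : R)) l
  rw [Finset.prod_pow_eq_pow_sum] at hX
  have hμ : monomial μ a = monomial (Finsupp.single j (μ j)) a * monomial (μ.erase j) 1 := by
    rw [monomial_mul, mul_one, Finsupp.single_add_erase]
  rw [hμ, monomial_eq (s := μ.erase j), C_1, one_mul, Finsupp.degree_apply]
  exact Ideal.mul_mem_left _ _ hX

lemma mem_pointIdeal_single_pow {j : σ} {n : ℕ} {F : MvPolynomial σ R}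
    (hF : ∀ μ : σ →₀ ℕ, (μ.erase j).degree < n → coeff μ F = 0) :
    F ∈ pointIdeal (Pi.single j (1 : R)) ^ n := by
  rw [F.as_sum]
  refine Ideal.sum_mem _ fun μ hμ => ?_
  have hn : n ≤ (μ.erase j).degree := not_lt.1 fun h => mem_support_iff.1 hμ (hF μ h)
  exact Ideal.pow_le_pow_right hn (monomial_mem_pointIdeal_single_pow j μ _)

lemma aeval_update_one_monomial (j : σ) (ν : σ →₀ ℕ) (a : R) :
    aeval (Function.update X j 1) (monomial ν a) = monomial (ν.erase j) a := by
  rw [aeval_monomial, monomial_eq, algebraMap_eq, Finsupp.prod, Finsupp.prod,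
    Finsupp.support_erase]
  congr 1
  refine (Finset.prod_erase _ (by simp)).symm.trans (Finset.prod_congr rfl fun l hl => ?_)
  simp [(Finset.mem_erase.1 hl).1]

lemma coeff_erase_aeval_update_one {j : σ} {d : ℕ} {F : MvPolynomial σ R} (hF : F.IsHomogeneous d)
    {μ : σ →₀ ℕ} (hμ : μ.degree = d) :
    coeff (μ.erase j) (aeval (Function.update X j 1) F) = coeff μ F := by
  have hinj : ∀ ν ∈ F.support, ν.erase j = μ.erase j → ν = μ := by
    intro ν hν h
    have hdeg : ν.degree = μ.degree :=
      (degree_eq_of_coeff_ne_zero hF (mem_support_iff.1 hν)).trans hμ.symm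
    rw [← Finsupp.erase_add_single j ν, ← Finsupp.erase_add_single j μ, h] at hdeg ⊢
    have hj : ν j = μ j := by simpa using hdeg
    rw [hj]
  conv_lhs => rw [F.as_sum]
  simp only [map_sum, aeval_update_one_monomial, coeff_sum, coeff_monomial]
  rw [Finset.sum_eq_single μ (fun ν hν hne => if_neg fun h => hne (hinj ν hν h))]
  · simp
  · simp

lemma coeff_eq_zero_of_mem_pointIdeal_single_pow {j : σ} {d n : ℕ} {F : MvPolynomial σ R}
    (hd : F.IsHomogeneous d) (hF : F ∈ pointIdeal (Pi.single j (1 : R)) ^ n) {μ : σ →₀ ℕ}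
    (hμ : (μ.erase j).degree < n) : coeff μ F = 0 := by
  by_contra hne
  rw [← coeff_erase_aeval_update_one hd (degree_eq_of_coeff_ne_zero hd hne) (j := j)] at hne
  refine hne ((mem_pow_idealOfVars_iff' _ _).1 ?_ _ hμ)
  refine map_mem_pow_of_mem_pointIdeal_pow _ (fun l => ?_) hF
  obtain rfl | hl := eq_or_ne l j
  · simp
  · simpa [hl] using Ideal.subset_span (Set.mem_range_self l)

end CoordinatePoint

section MoveToPoint

variable {σ k : Type*} [Field k] [DecidableEq σ]

/-- The linear change of coordinates `X l ↦ X l + p l * X j` for `l ≠ j`, `X j ↦ p j * X j`, which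
moves the point `p` to the `j`-th coordinate point. -/
noncomputable def moveToCoord (p : σ → k) (j : σ) : MvPolynomial σ k →ₐ[k] MvPolynomial σ k :=
  aeval fun l => Function.update X j 0 l + C (p l) * X j

lemma isHomogeneous_moveToCoord (p : σ → k) (j : σ) {d : ℕ} {F : MvPolynomial σ k}
    (hF : F.IsHomogeneous d) : (moveToCoord p j F).IsHomogeneous d := by
  rw [← one_mul d]
  refine hF.aeval _ fun l => ?_
  refine .add ?_ (by simpa using (isHomogeneous_C _ _).mul (isHomogeneous_X k j))
  obtain rfl | hl := eq_or_ne l j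
  · simpa using isHomogeneous_zero _ _ _
  · simpa [hl] using isHomogeneous_X k l

lemma mem_pointIdeal_pow_of_moveToCoord_mem {p : σ → k} {j : σ} (hp : p j ≠ 0) {n : ℕ}
    {F : MvPolynomial σ k} (hF : moveToCoord p j F ∈ pointIdeal (Pi.single j (1 : k)) ^ n) :
    F ∈ pointIdeal p ^ n := by
  let θ : MvPolynomial σ k →ₐ[k] MvPolynomial σ k :=
    aeval (Function.update (fun l => X l - C (p l * (p j)⁻¹) * X j) j (C (p j)⁻¹ * X j))
  have hC : (C (p j) * C (p j)⁻¹ : MvPolynomial σ k) = 1 := by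
    rw [← C_mul, mul_inv_cancel₀ hp, C_1]
  have hθ : θ.comp (moveToCoord p j) = AlgHom.id k _ := by
    refine algHom_ext fun l => ?_
    obtain rfl | hl := eq_or_ne l j
    · simp [θ, moveToCoord, ← mul_assoc, hC]
    · simp [θ, moveToCoord, hl, mul_assoc]
  have hθF : θ (moveToCoord p j F) = F := DFunLike.congr_fun hθ F
  rw [← hθF]
  refine map_mem_pow_of_mem_pointIdeal_pow _ (fun l => ?_) hF
  have hj := X_sub_C_mem_pointIdeal p j
  obtain rfl | hl := eq_or_ne l j
  · convert (pointIdeal p).mul_mem_left (C (p l)⁻¹) hj using 1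
    simp only [θ, aeval_X, Function.update_self, Pi.single_eq_same, map_one]
    linear_combination hC
  · convert (pointIdeal p).sub_mem (X_sub_C_mem_pointIdeal p l)
      ((pointIdeal p).mul_mem_left (C (p l * (p j)⁻¹)) hj) using 1
    simp only [θ, aeval_X, Function.update_of_ne hl, Pi.single_eq_of_ne hl, map_zero, map_mul]
    linear_combination -C (p l) * hC

end MoveToPoint

section ExpectedDimension

lemma two_mul_finrank_homogeneousSubmodule (k : Type*) [Field k] (d : ℕ) :
    2 * Module.finrank k (homogeneousSubmodule (Fin 3) k d) = (d + 1) * (d + 2) := by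
  have hV : homogeneousSubmodule (Fin 3) k d =
      restrictSupport k ↑(Finset.finsuppAntidiag (Finset.univ : Finset (Fin 3)) d) := by
    rw [homogeneousSubmodule_eq_finsupp_supported, restrictSupport]
    congr 1
    ext μ
    simp [Finsupp.degree_eq_sum]
  rw [hV, Module.finrank_eq_nat_card_basis (basisRestrictSupport k _), Nat.card_coe_set_eq,
    Set.ncard_coe_finset, Finset.card_finsuppAntidiag_nat_eq_choose, Finset.card_univ,
    Fintype.card_fin, show 3 + d - 1 = d + 2 by omega, Nat.choose_symm_add, Nat.choose_two_right,
    Nat.mul_div_cancel' (Nat.even_mul_pred_self _).two_dvd, mul_comm]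
  rfl

instance finite_homogeneousSubmodule {σ k : Type*} [Finite σ] [Field k] (d : ℕ) :
    Module.Finite k (homogeneousSubmodule σ k d) :=
  Module.Finite.iff_fg.2 (homogeneousSubmodule_fg _ _ d)

instance finite_linSys {k : ℕ} (p : Fin k → Fin 3 → ℂ) (d : ℕ) (m : Fin k → ℕ) :
    Module.Finite ℂ (linSys p d m) :=
  Submodule.finiteDimensional_of_le inf_le_left

/-- The exponents of the monomials of degree less than `n` in the variables other than `X j`. They
index the conditions imposed on forms by a point of multiplicity `n`. -/
def conditionIndex (j : Fin 3) (n : ℕ) : Finset (Fin 3 →₀ ℕ) :=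
  (Finset.range n).biUnion fun u => (Finset.univ.erase j).finsuppAntidiag u

lemma erase_mem_conditionIndex {j : Fin 3} {n : ℕ} {μ : Fin 3 →₀ ℕ} (hμ : (μ.erase j).degree < n) :
    μ.erase j ∈ conditionIndex j n := by
  refine Finset.mem_biUnion.2 ⟨_, Finset.mem_range.2 hμ, Finset.mem_finsuppAntidiag.2 ⟨?_, ?_⟩⟩
  · rw [Finsupp.degree_eq_sum, Finset.sum_erase _ Finsupp.erase_same]
  · rw [Finsupp.support_erase]
    exact Finset.erase_subset_erase _ (Finset.subset_univ _)

lemma two_mul_card_conditionIndex_le (j : Fin 3) (n : ℕ) :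
    2 * (conditionIndex j n).card ≤ n * (n + 1) := by
  have hcard (u : ℕ) : ((Finset.univ.erase j).finsuppAntidiag u).card = u + 1 := by
    rw [Finset.card_finsuppAntidiag_nat_eq_choose, Finset.card_erase_of_mem (Finset.mem_univ j),
      Finset.card_univ, Fintype.card_fin, show 3 - 1 + u - 1 = u + 1 by omega,
      Nat.choose_succ_self_right]
  calc 2 * (conditionIndex j n).card ≤ 2 * ∑ u ∈ Finset.range n, (u + 1) :=
        Nat.mul_le_mul_left 2 (Finset.card_biUnion_le.trans_eq (by simp only [hcard]))
    _ = (∑ u ∈ Finset.range (n + 1), u) * 2 := by rw [Finset.sum_range_succ', add_zero, mul_comm]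
    _ = n * (n + 1) := by rw [Finset.sum_range_id_mul_two, Nat.add_sub_cancel, mul_comm]

/-- The coefficient of the monomial of degree `d` which is `X ^ ν` up to a power of `X j`, after
moving `p` to the `j`-th coordinate point. -/
noncomputable def pointCondition (p : Fin 3 → ℂ) (j : Fin 3) (d : ℕ) (ν : Fin 3 →₀ ℕ) :
    MvPolynomial (Fin 3) ℂ →ₗ[ℂ] ℂ :=
  lcoeff ℂ (ν + Finsupp.single j (d - ν.degree)) ∘ₗ (moveToCoord p j).toLinearMap

lemma mem_pointIdeal_pow_of_pointCondition {p : Fin 3 → ℂ} {j : Fin 3} (hp : p j ≠ 0) {d n : ℕ}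
    {F : MvPolynomial (Fin 3) ℂ} (hF : F.IsHomogeneous d)
    (h : ∀ ν ∈ conditionIndex j n, pointCondition p j d ν F = 0) : F ∈ pointIdeal p ^ n := by
  refine mem_pointIdeal_pow_of_moveToCoord_mem hp (mem_pointIdeal_single_pow fun μ hμ => ?_)
  by_contra hne
  have hdeg := (degree_erase_add j μ).trans
    (degree_eq_of_coeff_ne_zero (isHomogeneous_moveToCoord p j hF) hne)
  have hμ' : μ.erase j + Finsupp.single j (d - (μ.erase j).degree) = μ := by
    rw [← hdeg, Nat.add_sub_cancel_left, Finsupp.erase_add_single]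
  exact hne (hμ' ▸ h _ (erase_mem_conditionIndex hμ))

variable {k : ℕ} {p : Fin k → Fin 3 → ℂ}

lemma le_two_mul_finrank_linSys (hp : ∀ i, p i ≠ 0) (d : ℕ) (m : Fin k → ℕ) :
    (d + 1) * (d + 2) ≤ 2 * Module.finrank ℂ (linSys p d m) + ∑ i, m i * (m i + 1) := by
  choose j hj using fun i => Function.ne_iff.1 (hp i)
  let V := homogeneousSubmodule (Fin 3) ℂ d
  let Φ : V →ₗ[ℂ] ((Σ i, conditionIndex (j i) (m i)) → ℂ) :=
    LinearMap.pi fun t => pointCondition (p t.1) (j t.1) d t.2 ∘ₗ V.subtype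
  have hker : (LinearMap.ker Φ).map V.subtype ≤ linSys p d m := by
    rintro _ ⟨F, hF, rfl⟩
    exact mem_linSys.2 ⟨F.2, fun i => mem_pointIdeal_pow_of_pointCondition (hj i) F.2
      fun ν hν => congrFun hF ⟨i, ν, hν⟩⟩
  have hker' := (Submodule.finrank_map_subtype_eq _ _).symm.trans_le (Submodule.finrank_mono hker)
  have hrange := Submodule.finrank_le (LinearMap.range Φ)
  rw [Module.finrank_fintype_fun_eq_card, Fintype.card_sigma] at hrange
  have hcard : 2 * ∑ i, Fintype.card (conditionIndex (j i) (m i)) ≤ ∑ i, m i * (m i + 1) := by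
    rw [Finset.mul_sum]
    exact Finset.sum_le_sum fun i _ => by
      simpa only [Fintype.card_coe] using two_mul_card_conditionIndex_le (j i) (m i)
  rw [← two_mul_finrank_homogeneousSubmodule ℂ d, ← Φ.finrank_range_add_finrank_ker]
  omega

lemma two_mul_virtDim (d : ℕ) (m : Fin k → ℕ) :
    2 * virtDim d m = d * (d + 3) - ∑ i, (m i : ℤ) * (m i + 1) := by
  have hd : (2 : ℤ) ∣ d * (d + 3) := by
    have h := (Int.even_mul_succ_self d).two_dvd
    rw [show (d * (d + 3) : ℤ) = d * (d + 1) + 2 * d by ring]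
    exact dvd_add h (dvd_mul_right 2 _)
  rw [virtDim, mul_sub, Int.mul_ediv_cancel' hd, Finset.mul_sum]
  simp only [Int.mul_ediv_cancel' (Int.even_mul_succ_self _).two_dvd]

lemma virtDim_le_projDim (hp : ∀ i, p i ≠ 0) (d : ℕ) (m : Fin k → ℕ) :
    virtDim d m ≤ projDim p d m := by
  have h : ((d + 1) * (d + 2) : ℤ) ≤
      2 * Module.finrank ℂ (linSys p d m) + ∑ i, (m i : ℤ) * (m i + 1) := by
    exact_mod_cast le_two_mul_finrank_linSys hp d m
  have hv := two_mul_virtDim d m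
  rw [projDim]
  linarith

lemma exists_mem_linSys_ne_zero (hp : ∀ i, p i ≠ 0) {d : ℕ} {m : Fin k → ℕ} (h : 0 ≤ virtDim d m) :
    ∃ F ∈ linSys p d m, F ≠ 0 := by
  refine Submodule.exists_mem_ne_zero_of_ne_bot fun hbot => ?_
  have := virtDim_le_projDim hp d m
  rw [projDim, hbot, finrank_bot] at this
  omega

lemma projDim_le_projDim_add {d d' : ℕ} {m m' : Fin k → ℕ} {G : MvPolynomial (Fin 3) ℂ}
    (hG : G ∈ linSys p d m) (hG0 : G ≠ 0) :
    projDim p d' m' ≤ projDim p (d + d') (m + m') := by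
  let T := (LinearMap.mulLeft ℂ G).restrict (p := linSys p d' m') fun _ hF => mul_mem_linSys hG hF
  have hT : Function.Injective T := fun _ _ h =>
    Subtype.ext (mul_left_cancel₀ hG0 (congrArg Subtype.val h))
  have := LinearMap.finrank_le_finrank_of_injective hT
  rw [projDim, projDim]
  omega

end ExpectedDimension

section Semicontinuity

variable {σ ι k V : Type*} [Finite ι] [Field k] [AddCommGroup V] [Module k V]
  [FiniteDimensional k V]

/-- The specialization at the parameter `x` of a linear map with polynomial coefficients. -/
noncomputable def specialize (Φ : V →ₗ[k] ι → MvPolynomial σ k) (x : σ → k) : V →ₗ[k] ι → k :=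
  (aeval x).toLinearMap.compLeft ι ∘ₗ Φ

lemma exists_eval_eq_det_comp_specialize (Φ : V →ₗ[k] ι → MvPolynomial σ k)
    (B : (ι → k) →ₗ[k] V) :
    ∃ P : MvPolynomial σ k, ∀ x, eval x P = LinearMap.det (B ∘ₗ specialize Φ x) := by
  classical
  cases nonempty_fintype ι
  let b := Module.finBasis k V
  let M : Matrix _ _ (MvPolynomial σ k) :=
    Matrix.of fun a c => ∑ i, C (b.repr (B (Pi.single i 1)) a) * Φ (b c) i
  refine ⟨M.det, fun x => ?_⟩
  rw [RingHom.map_det, ← LinearMap.det_toMatrix b]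
  congr 1
  ext a c
  rw [LinearMap.toMatrix_apply, LinearMap.comp_apply, pi_eq_sum_univ' (specialize Φ x (b c))]
  simp [M, specialize, mul_comm]

/-- The nonvanishing of a suitable maximal minor at `x₀` bounds the rank from below. -/
lemma exists_eval_ne_zero_finrank_ker_specialize_le (Φ : V →ₗ[k] ι → MvPolynomial σ k)
    (x₀ : σ → k) :
    ∃ P : MvPolynomial σ k, eval x₀ P ≠ 0 ∧ ∀ x, eval x P ≠ 0 →
      Module.finrank k (LinearMap.ker (specialize Φ x)) ≤
        Module.finrank k (LinearMap.ker (specialize Φ x₀)) := by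
  let W := LinearMap.range (specialize Φ x₀)
  obtain ⟨g, hg⟩ := (specialize Φ x₀).rangeRestrict.exists_rightInverse_of_surjective
    (LinearMap.range_rangeRestrict _)
  obtain ⟨B, hB⟩ := W.subtype.exists_leftInverse_of_injective W.ker_subtype
  obtain ⟨P, hP⟩ := exists_eval_eq_det_comp_specialize (Φ ∘ₗ g) B
  have hP₀ : B ∘ₗ specialize (Φ ∘ₗ g) x₀ = LinearMap.id := by
    rw [← hB, ← LinearMap.comp_id W.subtype, ← hg]
    rfl
  refine ⟨P, by simp [hP, hP₀], fun x hx => ?_⟩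
  have hinj : Function.Injective (B ∘ₗ specialize (Φ ∘ₗ g) x) := by
    rw [hP] at hx
    exact (LinearMap.equivOfDetNeZero _ hx).injective
  have hrange : Module.finrank k W ≤ Module.finrank k (LinearMap.range (specialize Φ x)) := by
    refine LinearMap.finrank_le_finrank_of_injective
      (f := (specialize Φ x).rangeRestrict ∘ₗ g) fun v w h => hinj ?_
    exact congrArg B (congrArg Subtype.val h)
  have h₀ : Module.finrank k W + _ = _ := (specialize Φ x₀).finrank_range_add_finrank_ker
  have hx := (specialize Φ x).finrank_range_add_finrank_ker
  omega

end Semicontinuity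

namespace Generically

variable {k : ℕ} {Q Q' : (Fin k → Fin 3 → ℂ) → Prop}

lemma and (hQ : Generically k Q) (hQ' : Generically k Q') : Generically k fun p => Q p ∧ Q' p := by
  obtain ⟨P, hP0, hP⟩ := hQ
  obtain ⟨P', hP0', hP'⟩ := hQ'
  refine ⟨P * P', mul_ne_zero hP0 hP0', fun p hp h => ?_⟩
  rw [map_mul, mul_ne_zero_iff] at h
  exact ⟨hP p hp h.1, hP' p hp h.2⟩

lemma mono (hQ : Generically k Q) (h : ∀ p, (∀ i, p i ≠ 0) → Q p → Q' p) :
    Generically k Q' := by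
  obtain ⟨P, hP0, hP⟩ := hQ
  exact ⟨P, hP0, fun p hp hpP => h p hp (hP p hp hpP)⟩

end Generically

lemma generically_projDim_le {k : ℕ} (d : ℕ) (m : Fin k → ℕ) (p₀ : Fin k → Fin 3 → ℂ) :
    Generically k fun p => projDim p d m ≤ projDim p₀ d m := by
  let V := homogeneousSubmodule (Fin 3) ℂ d
  have hfin (i : Fin k) : Finite {ν : Fin 3 → ℕ // ν 0 + ν 1 + ν 2 < m i} :=
    ((Set.finite_Iic fun _ => m i).subset fun ν hν l => by
      change ν 0 + ν 1 + ν 2 < m i at hν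
      fin_cases l <;> simp only [Fin.zero_eta, Fin.mk_one, Fin.reduceFinMk] <;> omega).to_subtype
  let Φ : V →ₗ[ℂ] (Σ i, {ν : Fin 3 → ℕ // ν 0 + ν 1 + ν 2 < m i}) →
      MvPolynomial (Fin k × Fin 3) ℂ :=
    LinearMap.pi fun t =>
      (rename fun l => (t.1, l)).toLinearMap ∘ₗ mderiv t.2 ∘ₗ V.subtype
  have hΦ (p : Fin k → Fin 3 → ℂ) :
      (LinearMap.ker (specialize Φ fun x => p x.1 x.2)).map V.subtype = linSys p d m := by
    have heval (i : Fin k) (G : MvPolynomial (Fin 3) ℂ) :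
        eval (fun x : Fin k × Fin 3 => p x.1 x.2) (rename (fun l => (i, l)) G) = eval (p i) G :=
      eval_rename ..
    ext F
    simp [Φ, V, linSys, specialize, funext_iff, heval, and_comm, Sigma.forall]
  obtain ⟨P, hP₀, hP⟩ := exists_eval_ne_zero_finrank_ker_specialize_le Φ fun x => p₀ x.1 x.2
  refine ⟨P, fun h => hP₀ (by rw [h, map_zero]), fun p _ hp => ?_⟩
  have := hP _ hp
  rw [← Submodule.finrank_map_subtype_eq, ← Submodule.finrank_map_subtype_eq, hΦ, hΦ] at this
  simp only [projDim]
  omega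

section LowerBound

/-- The quasi-homogeneous multiplicity vector `(a, b, …, b)` on `n + 1` points; `qh` is the case
`b = 6`. -/
def quasiHom (n a b : ℕ) : Fin (n + 1) → ℕ := fun i => if i = 0 then a else b

lemma quasiHom_add (n a b a' b' : ℕ) :
    quasiHom n a b + quasiHom n a' b' = quasiHom n (a + a') (b + b') := by
  ext i
  by_cases hi : i = 0 <;> simp [quasiHom, hi]

lemma nsmul_quasiHom (n t a b : ℕ) : t • quasiHom n a b = quasiHom n (t * a) (t * b) := by
  ext i
  by_cases hi : i = 0 <;> simp [quasiHom, hi]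

lemma two_mul_virtDim_quasiHom (n d a b : ℕ) :
    2 * virtDim d (quasiHom n a b) = d * (d + 3) - a * (a + 1) - n * (b * (b + 1)) := by
  rw [two_mul_virtDim, Fin.sum_univ_succ]
  simp [quasiHom, sub_sub]

lemma le_two_mul_projDim_quasiHom {e : ℕ} (he : 1 ≤ e) (r t : ℕ) {p : Fin (2 * e + 1) → Fin 3 → ℂ}
    (hp : ∀ i, p i ≠ 0) :
    (r * (r + 3) : ℤ) ≤ 2 * projDim p ((r + t + 2) * e + r)
      (quasiHom (2 * e) ((r + t + 2) * e - t) (r + t + 1)) := by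
  obtain ⟨f, rfl⟩ := Nat.exists_eq_add_of_le' he
  obtain ⟨G, hG, hG0⟩ := exists_mem_linSys_ne_zero hp (d := 2 * (f + 1))
    (m := quasiHom _ (2 * (f + 1)) 1) <| by
      have := two_mul_virtDim_quasiHom (2 * (f + 1)) (2 * (f + 1)) (2 * (f + 1)) 1
      push_cast at this
      linarith
  obtain ⟨C, hC, hC0⟩ := exists_mem_linSys_ne_zero hp (d := f + 1) (m := quasiHom _ f 1) <| by
    have := two_mul_virtDim_quasiHom (2 * (f + 1)) (f + 1) f 1
    push_cast at this
    linarith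
  have hGC := mul_mem_linSys hG (pow_mem_linSys hC t)
  have hadd := projDim_le_projDim_add (d' := r * (f + 2)) (m' := quasiHom _ (r * (f + 1)) r) hGC
    (mul_ne_zero hG0 (pow_ne_zero t hC0))
  have hvirt := virtDim_le_projDim hp (r * (f + 2)) (quasiHom _ (r * (f + 1)) r)
  have htwo := two_mul_virtDim_quasiHom (2 * (f + 1)) (r * (f + 2)) (r * (f + 1)) r
  have hd : (r + t + 2) * (f + 1) + r = 2 * (f + 1) + (f + 1) * t + r * (f + 2) := by ring
  have hm : (r + t + 2) * (f + 1) - t = 2 * (f + 1) + t * f + r * (f + 1) :=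
    Nat.sub_eq_of_eq_add (by ring)
  have hmul : r + t + 1 = 1 + t * 1 + r := by ring
  rw [nsmul_quasiHom, quasiHom_add, quasiHom_add, ← hd, ← hm, ← hmul] at hadd
  push_cast at htwo
  linarith

end LowerBound

section Residuation

open scoped Polynomial

lemma coeff_succ_taylor_X_sub_C_mul {R : Type*} [CommRing R] (u : R) (f : R[X]) (j : ℕ) :
    (((Polynomial.X - Polynomial.C u) * f).taylor u).coeff (j + 1) = (f.taylor u).coeff j := by
  rw [Polynomial.taylor_mul, map_sub, Polynomial.taylor_X, Polynomial.taylor_C,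
    add_sub_cancel_right, Polynomial.coeff_X_mul]

/-- A polynomial in `Y` over `R[X]` has total degree at most `D` in `X` and `Y`. -/
def TotalDegreeLE {R : Type*} [CommRing R] (D : ℕ) (f : R[X][X]) : Prop :=
  ∀ n j, D < n + j → (f.coeff j).coeff n = 0

namespace TotalDegreeLE

variable {R : Type*} [CommRing R] {f : R[X][X]} {e D : ℕ}

lemma of_X_sub_C_X_pow_mul (he : 1 ≤ e)
    (hf : TotalDegreeLE (D + e) ((Polynomial.X - Polynomial.C (Polynomial.X ^ e)) * f)) :
    TotalDegreeLE D f := by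
  intro n j
  induction j generalizing n with
  | zero =>
    intro h
    have h₀ := hf (n + e) 0 (by omega)
    simpa only [sub_mul, Polynomial.coeff_sub, Polynomial.mul_coeff_zero,
      Polynomial.coeff_X_zero, zero_mul, Polynomial.coeff_C_zero, Polynomial.coeff_X_pow_mul,
      Polynomial.coeff_neg, zero_sub, neg_eq_zero] using h₀
  | succ j ih =>
    intro h
    have hj := hf (n + e) (j + 1) (by omega)
    simpa only [sub_mul, Polynomial.coeff_sub, Polynomial.coeff_X_mul, Polynomial.coeff_C_mul,
      Polynomial.coeff_X_pow_mul, ih (n + e) (by omega), zero_sub, neg_eq_zero] using hj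

lemma natDegree_eval_X_pow_le {K : ℕ} (he : 1 ≤ e) (hf : TotalDegreeLE D f)
    (hK : f.degree < (K + 1 : ℕ)) : (f.eval (Polynomial.X ^ e)).natDegree + K ≤ D + e * K := by
  obtain ⟨e, rfl⟩ := Nat.exists_eq_add_of_le' he
  suffices h : (f.eval (Polynomial.X ^ (e + 1))).natDegree ≤ D + e * K by linarith
  rw [Polynomial.eval_eq_sum_range' (n := K + 1)]
  · refine Polynomial.natDegree_sum_le_of_forall_le _ _ fun j hj => ?_
    refine Polynomial.natDegree_le_iff_coeff_eq_zero.2 fun n hn => ?_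
    rw [← pow_mul, Polynomial.coeff_mul_X_pow']
    split_ifs with h
    · have : e * j ≤ e * K := Nat.mul_le_mul_left e (Finset.mem_range_succ_iff.1 hj)
      have : (e + 1) * j = e * j + j := by ring
      exact hf _ _ (by omega)
    · rfl
  · exact Nat.lt_succ_of_le <| Polynomial.natDegree_le_iff_coeff_eq_zero.2
      ((Polynomial.degree_lt_iff_coeff_zero _ _).1 hK)

end TotalDegreeLE

variable {k ι : Type*} [Field k] {s : ι → k} {e D K : ℕ} {f : k[X][X]}

/-- The polynomials in `Y` over `k[X]`, of degree less than `K` in `Y` and of total degree at most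
`D`, vanishing to order `K` at the points `(s i, s i ^ e)` of the curve `Y = X ^ e`. The last
condition is expressed through the expansion in powers of `Y - X ^ e`. -/
noncomputable def curveSystem (s : ι → k) (e D K : ℕ) : Submodule k k[X][X] where
  carrier := {f | TotalDegreeLE D f ∧ f.degree < K ∧
    ∀ i j, (Polynomial.X - Polynomial.C (s i)) ^ (K - j) ∣ (f.taylor (Polynomial.X ^ e)).coeff j}
  zero_mem' := by simp [TotalDegreeLE]
  add_mem' := by
    rintro f g ⟨hf, hfK, hfs⟩ ⟨hg, hgK, hgs⟩
    refine ⟨fun n j h => by simp [hf n j h, hg n j h], ?_, fun i j => ?_⟩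
    · exact (Polynomial.degree_add_le f g).trans_lt (max_lt hfK hgK)
    · rw [map_add, Polynomial.coeff_add]
      exact dvd_add (hfs i j) (hgs i j)
  smul_mem' := by
    rintro c f ⟨hf, hfK, hfs⟩
    refine ⟨fun n j h => by simp [hf n j h], (Polynomial.degree_smul_le c f).trans_lt hfK,
      fun i j => ?_⟩
    rw [← algebraMap_smul k[X] c f, map_smul, Polynomial.coeff_smul, smul_eq_mul]
    exact (hfs i j).mul_left _

lemma curveSystem_zero : curveSystem s e D 0 = ⊥ :=
  eq_bot_iff.2 fun _ hf => Polynomial.degree_eq_bot.1 (Nat.WithBot.lt_zero_iff.1 hf.2.1)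

lemma mem_curveSystem_of_X_sub_C_X_pow_mul_mem (he : 1 ≤ e)
    (hf : (Polynomial.X - Polynomial.C (Polynomial.X ^ e)) * f ∈
      curveSystem s e (D + e) (K + 1)) : f ∈ curveSystem s e D K := by
  obtain ⟨hD, hK, hs⟩ := hf
  refine ⟨hD.of_X_sub_C_X_pow_mul he, ?_, fun i j => ?_⟩
  · rw [mul_comm, Polynomial.degree_mul, Polynomial.degree_X_sub_C, Nat.cast_succ] at hK
    exact lt_of_add_lt_add_right hK
  · have := hs i (j + 1)
    rwa [coeff_succ_taylor_X_sub_C_mul, Nat.add_sub_add_right] at this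

lemma exists_mem_degreeLT_eval_X_pow_eq_prod_mul [Fintype ι] (hs : Function.Injective s)
    (he : 1 ≤ e) (hf : f ∈ curveSystem s e D (K + 1)) :
    ∃ q ∈ Polynomial.degreeLT k (D + e * K + 1 - K - Fintype.card ι * (K + 1)),
      (∏ i, (Polynomial.X - Polynomial.C (s i)) ^ (K + 1)) * q = f.eval (Polynomial.X ^ e) := by
  have hmonic (i : ι) : ((Polynomial.X - Polynomial.C (s i)) ^ (K + 1)).Monic :=
    (Polynomial.monic_X_sub_C _).pow _
  have hdvd : ∏ i, (Polynomial.X - Polynomial.C (s i)) ^ (K + 1) ∣ f.eval (Polynomial.X ^ e) :=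
    Finset.prod_dvd_of_coprime
      (fun _ _ _ _ hij => (Polynomial.pairwise_coprime_X_sub_C hs hij).pow) fun i _ => by
        simpa only [Polynomial.taylor_coeff_zero, Nat.sub_zero] using hf.2.2 i 0
  obtain ⟨q, hq⟩ := hdvd
  refine ⟨q, Polynomial.mem_degreeLT.2 ?_, hq.symm⟩
  obtain rfl | hq0 := eq_or_ne q 0
  · exact Polynomial.degree_zero.trans_lt (WithBot.bot_lt_coe _)
  have hdeg := hf.1.natDegree_eval_X_pow_le he hf.2.1
  rw [hq, (Polynomial.monic_prod_of_monic _ _ fun i _ => hmonic i).natDegree_mul' hq0,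
    Polynomial.natDegree_prod_of_monic _ _ fun i _ => hmonic i] at hdeg
  simp only [Polynomial.natDegree_pow, Polynomial.natDegree_X_sub_C, mul_one, Finset.sum_const,
    Finset.card_univ, smul_eq_mul] at hdeg
  rw [Polynomial.degree_eq_natDegree hq0, Nat.cast_lt]
  omega

lemma rank_curveSystem_succ_le [Fintype ι] (hs : Function.Injective s) (he : 1 ≤ e) :
    Module.rank k (curveSystem s e (D + e) (K + 1)) ≤
      (D + e + e * K + 1 - K - Fintype.card ι * (K + 1) : ℕ) +
        Module.rank k (curveSystem s e D K) := by
  let restr : k[X][X] →ₗ[k] k[X] := (Polynomial.leval (Polynomial.X ^ e)).restrictScalars k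
  let P : k[X] := ∏ i, (Polynomial.X - Polynomial.C (s i)) ^ (K + 1)
  have hrange : LinearMap.range (restr.domRestrict (curveSystem s e (D + e) (K + 1))) ≤
      (Polynomial.degreeLT k (D + e + e * K + 1 - K - Fintype.card ι * (K + 1))).map
        (LinearMap.mulLeft k P) := by
    rintro _ ⟨⟨f, hf⟩, rfl⟩
    exact exists_mem_degreeLT_eval_X_pow_eq_prod_mul hs he hf
  have hker : (LinearMap.ker (restr.domRestrict (curveSystem s e (D + e) (K + 1)))).map
      (Submodule.subtype _) ≤ (curveSystem s e D K).map
        (LinearMap.mulLeft k (Polynomial.X - Polynomial.C (Polynomial.X ^ e))) := by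
    rintro _ ⟨⟨f, hf⟩, hf0, rfl⟩
    obtain ⟨g, rfl⟩ := Polynomial.dvd_iff_isRoot.2 hf0
    exact ⟨g, mem_curveSystem_of_X_sub_C_X_pow_mul_mem he hf, rfl⟩
  have hrank := LinearMap.rank_range_add_rank_ker (M := curveSystem s e (D + e) (K + 1))
    (M₁ := k[X]) (restr.domRestrict _)
  rw [← hrank]
  gcongr
  · refine (Submodule.rank_mono hrange).trans ((rank_map_le _ _).trans_eq ?_)
    rw [(Polynomial.degreeLTEquiv k _).rank_eq, rank_fin_fun]
  · rw [(Submodule.equivSubtypeMap _ _).rank_eq]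
    exact (Submodule.rank_mono hker).trans (rank_map_le _ _)

lemma rank_curveSystem_le [Fintype ι] (hs : Function.Injective s) (he : 1 ≤ e)
    (hι : Fintype.card ι = 2 * e) (r K : ℕ) :
    Module.rank k (curveSystem s e ((K + 1) * e + r) K) ≤
      (∑ j ∈ Finset.range K, (r + 1 - j) : ℕ) := by
  induction K with
  | zero => simp [curveSystem_zero]
  | succ K ih =>
    have hD : (K + 1 + 1) * e + r = (K + 1) * e + r + e := by ring
    have hcount : (K + 1) * e + r + e + e * K + 1 - K - Fintype.card ι * (K + 1) = r + 1 - K := by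
      rw [hι, show (K + 1) * e + r + e + e * K + 1 = 2 * e * (K + 1) + (r + 1) by ring]
      omega
    rw [hD, Finset.sum_range_succ, add_comm (∑ j ∈ _, _), Nat.cast_add, ← hcount]
    exact (rank_curveSystem_succ_le hs he).trans (by gcongr)

end Residuation

section Chart

open scoped Polynomial

/-- The dehomogenization of a form in `X, Y, Z` in the chart `Y = 1`, as a polynomial in the last
coordinate over the polynomials in the first one. -/
noncomputable def toChart (k : Type*) [CommRing k] : MvPolynomial (Fin 3) k →ₐ[k] k[X][X] :=
  aeval ![Polynomial.C Polynomial.X, 1, Polynomial.X]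

variable {k : Type*} [CommRing k] {d : ℕ} {F : MvPolynomial (Fin 3) k}

lemma coeff_coeff_toChart (F : MvPolynomial (Fin 3) k) (n j : ℕ) :
    ((toChart k F).coeff j).coeff n =
      ∑ μ ∈ F.support, if j = μ 2 ∧ n = μ 0 then coeff μ F else 0 := by
  rw [toChart, aeval_def, eval₂_eq', Polynomial.finsetSum_coeff, Polynomial.finsetSum_coeff]
  refine Finset.sum_congr rfl fun μ _ => ?_
  have halg : algebraMap k k[X][X] (coeff μ F) = Polynomial.C (Polynomial.C (coeff μ F)) := rfl
  simp only [halg, Fin.prod_univ_three, Matrix.cons_val_zero, Matrix.cons_val_one, Matrix.cons_val,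
    one_pow, mul_one, ← Polynomial.C_pow, ← mul_assoc, ← Polynomial.C_mul,
    Polynomial.coeff_C_mul_X_pow, ite_and]
  split_ifs <;> simp_all

lemma degree_fin_three (μ : Fin 3 →₀ ℕ) : μ.degree = μ 0 + μ 1 + μ 2 := by
  rw [Finsupp.degree_eq_sum, Fin.sum_univ_three]

lemma totalDegreeLE_toChart (hd : F.IsHomogeneous d) : TotalDegreeLE d (toChart k F) := by
  intro n j h
  rw [coeff_coeff_toChart]
  refine Finset.sum_eq_zero fun μ hμ => if_neg ?_
  have := degree_eq_of_coeff_ne_zero hd (mem_support_iff.1 hμ)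
  rw [degree_fin_three] at this
  omega

lemma degree_toChart_lt {m K : ℕ} (hd : F.IsHomogeneous d)
    (hF : F ∈ pointIdeal ![0, 0, 1] ^ m) (h : d < m + K) : (toChart k F).degree < K := by
  refine (Polynomial.degree_lt_iff_coeff_zero _ _).2 fun j hj => Polynomial.ext fun n => ?_
  rw [coeff_coeff_toChart]
  refine Finset.sum_eq_zero fun μ hμ => ite_eq_right_iff.2 fun hjn => ?_
  have hpoint : (![0, 0, 1] : Fin 3 → k) = Pi.single 2 1 := by
    ext i; fin_cases i <;> rfl
  rw [hpoint] at hF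
  have hdeg := degree_eq_of_coeff_ne_zero hd (mem_support_iff.1 hμ)
  have herase := degree_erase_add 2 μ
  exact coeff_eq_zero_of_mem_pointIdeal_single_pow hd hF (by omega)

lemma eq_zero_of_toChart_eq_zero (hd : F.IsHomogeneous d) (h : toChart k F = 0) : F = 0 := by
  by_contra hne
  obtain ⟨μ, hμ⟩ := support_nonempty.2 hne
  have hcoeff := coeff_coeff_toChart F (μ 0) (μ 2)
  rw [Finset.sum_eq_single_of_mem μ hμ, h] at hcoeff
  · exact mem_support_iff.1 hμ (by simpa using hcoeff.symm)
  · refine fun ν hν hνμ => if_neg fun hcoord => hνμ (Finsupp.ext fun i => ?_)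
    have hdegμ := degree_eq_of_coeff_ne_zero hd (mem_support_iff.1 hμ)
    have hdegν := degree_eq_of_coeff_ne_zero hd (mem_support_iff.1 hν)
    rw [degree_fin_three] at hdegμ hdegν
    fin_cases i <;> simp only [Fin.zero_eta, Fin.mk_one, Fin.reduceFinMk] <;> omega

lemma coeff_mem_pow_of_mem_comap_constantCoeff_pow {R : Type*} [CommRing R] {I : Ideal R} {n : ℕ}
    {f : R[X]} (hf : f ∈ I.comap Polynomial.constantCoeff ^ n) (j : ℕ) :
    f.coeff j ∈ I ^ (n - j) := by
  induction n generalizing f j with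
  | zero => simp
  | succ n ih =>
    rw [pow_succ] at hf
    induction hf using Submodule.mul_induction_on' with
    | mem_mul_mem f hf g hg =>
      rw [Polynomial.coeff_mul]
      refine Ideal.sum_mem _ fun (a, b) hab => ?_
      obtain rfl := Finset.HasAntidiagonal.mem_antidiagonal.1 hab
      cases b with
      | zero =>
        exact Ideal.pow_le_pow_right (by omega) (pow_succ I _ ▸ Ideal.mul_mem_mul (ih hf a) hg)
      | succ b =>
        exact Ideal.pow_le_pow_right (by omega) (Ideal.mul_mem_right _ _ (ih hf a))
    | add f _ g _ hf hg => exact Ideal.add_mem _ hf hg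

lemma X_sub_C_pow_dvd_coeff_taylor_toChart {s : k} {e n : ℕ}
    (hF : F ∈ pointIdeal ![s, 1, s ^ e] ^ n) (j : ℕ) :
    (Polynomial.X - Polynomial.C s) ^ (n - j) ∣
      ((toChart k F).taylor (Polynomial.X ^ e)).coeff j := by
  let I : Ideal k[X] := Ideal.span {Polynomial.X - Polynomial.C s}
  let φ : MvPolynomial (Fin 3) k →ₐ[k] k[X][X] :=
    ((Polynomial.taylorAlgHom (Polynomial.X ^ e : k[X])).restrictScalars k).comp (toChart k)
  have hφ (i : Fin 3) : φ (X i) - algebraMap k k[X][X] (![s, 1, s ^ e] i) ∈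
      I.comap Polynomial.constantCoeff := by
    have hX : Polynomial.X - Polynomial.C s ∈ I := Ideal.mem_span_singleton_self _
    have hXe : Polynomial.X ^ e - Polynomial.C (s ^ e) ∈ I :=
      Ideal.mem_span_singleton.2 (by simpa only [map_pow] using sub_dvd_pow_sub_pow _ _ e)
    fin_cases i
    · simpa [φ, toChart, Polynomial.algebraMap_eq] using hX
    · simp [φ, toChart]
    · simpa [φ, toChart, Polynomial.algebraMap_eq, -map_pow] using hXe
  have := coeff_mem_pow_of_mem_comap_constantCoeff_pow (map_mem_pow_of_mem_pointIdeal_pow φ hφ hF) j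
  rwa [Ideal.span_singleton_pow, Ideal.mem_span_singleton] at this

end Chart

section UpperBound

/-- Points in special position: `(0 : 0 : 1)` and `n` points of the curve `Z = X ^ e` in the chart
`Y = 1`. -/
noncomputable def specialPoints (n e : ℕ) : Fin (n + 1) → Fin 3 → ℂ :=
  Fin.cons ![0, 0, 1] fun i => ![(i : ℂ), 1, (i : ℂ) ^ e]

lemma toChart_mem_curveSystem {n e d a K : ℕ} (h : d < a + K) {F : MvPolynomial (Fin 3) ℂ}
    (hF : F ∈ linSys (specialPoints n e) d (quasiHom n a K)) :
    toChart ℂ F ∈ curveSystem (fun i : Fin n => (i : ℂ)) e d K := by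
  obtain ⟨hd, hm⟩ := mem_linSys.1 hF
  exact ⟨totalDegreeLE_toChart hd, degree_toChart_lt hd (hm 0) h,
    fun i => X_sub_C_pow_dvd_coeff_taylor_toChart (hm i.succ)⟩

lemma two_mul_sum_range_tsub_le (n K : ℕ) :
    2 * ∑ j ∈ Finset.range K, (n - j) ≤ n * (n + 1) := by
  induction n generalizing K with
  | zero => simp
  | succ n ih =>
    cases K with
    | zero => simp
    | succ K =>
      simp only [Finset.sum_range_succ', Nat.add_sub_add_right, Nat.sub_zero]
      linarith [ih K]

lemma two_mul_projDim_specialPoints_le {e : ℕ} (he : 1 ≤ e) (r t : ℕ) :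
    2 * projDim (specialPoints (2 * e) e) ((r + t + 2) * e + r)
      (quasiHom (2 * e) ((r + t + 2) * e - t) (r + t + 1)) ≤ r * (r + 3) := by
  have hK : (r + t + 2) * e + r < (r + t + 2) * e - t + (r + t + 1) := by omega
  let T := (toChart ℂ).toLinearMap.restrict fun _ hF =>
    toChart_mem_curveSystem (n := 2 * e) (e := e) hK hF
  have hT : Function.Injective T := (injective_iff_map_eq_zero T).2 fun F hF =>
    Subtype.ext (eq_zero_of_toChart_eq_zero (mem_linSys.1 F.2).1 (congrArg Subtype.val hF))
  have hs : Function.Injective fun i : Fin (2 * e) => (i : ℂ) :=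
    Nat.cast_injective.comp Fin.val_injective
  have hrank := (LinearMap.rank_le_of_injective T hT).trans
    (rank_curveSystem_le hs he (Fintype.card_fin _) r (r + t + 1))
  rw [← Module.finrank_eq_rank, Nat.cast_le] at hrank
  have hfinrank := (Nat.mul_le_mul_left 2 hrank).trans (two_mul_sum_range_tsub_le (r + 1) _)
  zify at hfinrank
  rw [projDim]
  linarith

end UpperBound

theorem special_L_7e_families_general {e : ℕ} (he : 1 ≤ e) (r t : ℕ) :
    2 * virtDim ((r + t + 2) * e + r) (quasiHom (2 * e) ((r + t + 2) * e - t) (r + t + 1)) =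
      r * (r + 3) - t * (t - 1) ∧
    Generically (2 * e + 1) fun p => 2 * projDim p ((r + t + 2) * e + r)
      (quasiHom (2 * e) ((r + t + 2) * e - t) (r + t + 1)) = r * (r + 3) := by
  constructor
  · have ht : t ≤ (r + t + 2) * e := le_mul_of_le_of_one_le (by omega) he
    rw [two_mul_virtDim_quasiHom]
    push_cast [ht]
    ring
  · have hspecial := two_mul_projDim_specialPoints_le he r t
    have hgeneric := generically_projDim_le ((r + t + 2) * e + r)
      (quasiHom (2 * e) ((r + t + 2) * e - t) (r + t + 1)) (specialPoints (2 * e) e)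
    refine hgeneric.mono fun p hp h => ?_
    exact le_antisymm (by omega) (le_two_mul_projDim_quasiHom he r t hp)

theorem special_L_7e_families (e : ℕ) (he : 1 ≤ e) :
    virtDim (7 * e) (qh (2 * e) (7 * e - 5)) = -10 ∧
    virtDim (7 * e + 1) (qh (2 * e) (7 * e - 4)) = -4 ∧
    virtDim (7 * e + 2) (qh (2 * e) (7 * e - 3)) = 2 ∧
    virtDim (7 * e + 3) (qh (2 * e) (7 * e - 2)) = 8 ∧
    Generically (2 * e + 1) (fun p =>
      (projDim p (7 * e) (qh (2 * e) (7 * e - 5)) = 0 ∧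
        projDim p (7 * e) (qh (2 * e) (7 * e - 5)) >
          max (-1) (virtDim (7 * e) (qh (2 * e) (7 * e - 5)))) ∧
      (projDim p (7 * e + 1) (qh (2 * e) (7 * e - 4)) = 2 ∧
        projDim p (7 * e + 1) (qh (2 * e) (7 * e - 4)) >
          max (-1) (virtDim (7 * e + 1) (qh (2 * e) (7 * e - 4)))) ∧
      (projDim p (7 * e + 2) (qh (2 * e) (7 * e - 3)) = 5 ∧
        projDim p (7 * e + 2) (qh (2 * e) (7 * e - 3)) >
          max (-1) (virtDim (7 * e + 2) (qh (2 * e) (7 * e - 3)))) ∧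
      (projDim p (7 * e + 3) (qh (2 * e) (7 * e - 2)) = 9 ∧
        projDim p (7 * e + 3) (qh (2 * e) (7 * e - 2)) >
          max (-1) (virtDim (7 * e + 3) (qh (2 * e) (7 * e - 2))))) := by
  have hqh (a : ℕ) : qh (2 * e) a = quasiHom (2 * e) a 6 := rfl
  obtain ⟨v₀, ℓ₀⟩ := special_L_7e_families_general he 0 5
  obtain ⟨v₁, ℓ₁⟩ := special_L_7e_families_general he 1 4
  obtain ⟨v₂, ℓ₂⟩ := special_L_7e_families_general he 2 3
  obtain ⟨v₃, ℓ₃⟩ := special_L_7e_families_general he 3 2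
  norm_num at v₀ v₁ v₂ v₃ ℓ₀ ℓ₁ ℓ₂ ℓ₃
  simp only [hqh]
  refine ⟨by omega, by omega, by omega, by omega, ?_⟩
  refine ((ℓ₀.and ℓ₁).and (ℓ₂.and ℓ₃)).mono fun p _ h => ?_
  obtain ⟨⟨h₀, h₁⟩, h₂, h₃⟩ := h
  omega
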